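/- Let 0 < q < 1 be real, let x be a real number, and let d be an odd positive integer. For every integer n ≥ 0, the Carlitz type q-Changhee polynomial value satisfies Ch_{n,q}(x) = ((1+q)/(1+q^d)) · Σ_{k=0}^{n} [d]_q^k · ( Σ_{a=0}^{d−1} (−q)^a ℰ_{k,q^d}((a+x)/d) ) · S₁(n,k), where ℰ_{k,q^d} denotes the Carlitz q-Euler polynomial value formed with base q^d in place of q. -/

import Mathlib

/-- The `q`-analogue `[x]_q = (1 - q^x)/(1 - q)` (real exponent, via `rpow`). -/
noncomputable def qnum (q x : ℝ) : ℝ := (1 - q ^ x) / (1 - q)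

/-- Carlitz `q`-Euler polynomial value
`ℰ_{n,q}(x) = (1+q) ∑_{m=0}^∞ (-q)^m [m+x]_q^n`. -/
noncomputable def qEuler (q : ℝ) (n : ℕ) (x : ℝ) : ℝ :=
  (1 + q) * ∑' m : ℕ, (-q) ^ m * (qnum q ((m : ℝ) + x)) ^ n

/-- Signed Stirling numbers of the first kind, defined as the coefficients of the
falling factorial: `x(x-1)⋯(x-n+1) = ∑_{k=0}^n S₁(n,k) x^k`. -/
noncomputable def S1 (n k : ℕ) : ℤ := (descPochhammer ℤ n).coeff k

/-- Stirling numbers of the second kind, so that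
`x^n = ∑_{k=0}^n S₂(n,k) x(x-1)⋯(x-k+1)`. -/
def S2 : ℕ → ℕ → ℕ
  | 0, 0 => 1
  | 0, _ + 1 => 0
  | _ + 1, 0 => 0
  | n + 1, k + 1 => S2 n k + (k + 1) * S2 n (k + 1)

/-- Carlitz type `q`-Changhee polynomial value
`Ch_{n,q}(x) = ∑_{k=0}^n S₁(n,k) ℰ_{k,q}(x)`. -/
noncomputable def qChanghee (q : ℝ) (n : ℕ) (x : ℝ) : ℝ :=
  ∑ k ∈ Finset.range (n + 1), (S1 n k : ℝ) * qEuler q k x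

/-- The defining series of the Carlitz `q`-Euler polynomials is summable. -/
lemma qEuler_summable (q x : ℝ) (hq0 : 0 < q) (hq1 : q < 1) (k : ℕ) :
    Summable (fun m : ℕ => (-q) ^ m * (qnum q ((m : ℝ) + x)) ^ k) := by
  have hg : Summable (fun m : ℕ => q ^ m * ((1 + q ^ x) / (1 - q)) ^ k) :=
    (summable_geometric_of_lt_one hq0.le hq1).mul_right _
  refine Summable.of_norm_bounded hg ?_
  intro m
  have h1 : 0 < 1 - q := by linarith
  have hx : 0 < q ^ x := Real.rpow_pos_of_pos hq0 x
  have hm : q ^ m ≤ 1 := pow_le_one₀ hq0.le hq1.le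
  have hm0 : 0 < q ^ m := pow_pos hq0 m
  rw [norm_mul, norm_pow, norm_pow, norm_neg, Real.norm_eq_abs, Real.norm_eq_abs, abs_of_pos hq0]
  gcongr
  unfold qnum
  rw [abs_div, abs_of_pos h1, Real.rpow_add hq0, Real.rpow_natCast]
  gcongr
  rw [abs_le]
  constructor <;> nlinarith

/-- Multiplicativity of the `q`-numbers. -/
lemma qnum_mul_base (q : ℝ) (hq0 : 0 < q) (hq1 : q < 1) (d : ℕ) (hd0 : 0 < d) (y : ℝ) :
    qnum q (d : ℝ) * qnum (q ^ d) (y / d) = qnum q y := by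
  have hd : (d : ℝ) ≠ 0 := by exact_mod_cast hd0.ne'
  have h1 : 1 - q ≠ 0 := by linarith
  have h2 : 1 - q ^ d ≠ 0 := by
    have := pow_lt_one₀ hq0.le hq1 hd0.ne'
    linarith
  have h3 : (q ^ d) ^ (y / d) = q ^ y := by
    rw [← Real.rpow_natCast, ← Real.rpow_mul hq0.le, mul_div_cancel₀ _ hd]
  unfold qnum
  rw [h3, Real.rpow_natCast]
  field_simp

/-- Distribution relation for the Carlitz `q`-Euler polynomials. -/
lemma qEuler_distribution (q x : ℝ) (hq0 : 0 < q) (hq1 : q < 1)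
    (d : ℕ) (hd0 : 0 < d) (hd : Odd d) (k : ℕ) :
    qEuler q k x = ((1 + q) / (1 + q ^ d)) * ((qnum q (d : ℝ)) ^ k *
      ∑ a ∈ Finset.range d, (-q) ^ a * qEuler (q ^ d) k (((a : ℝ) + x) / (d : ℝ))) := by
  have hdr : (d : ℝ) ≠ 0 := by exact_mod_cast hd0.ne'
  have h2 : 1 + q ^ d ≠ 0 := by positivity
  have hsplit : ∑' m : ℕ, (-q) ^ m * (qnum q ((m : ℝ) + x)) ^ k =
      ∑ a ∈ Finset.range d, ∑' m : ℕ, (-q) ^ (a + d * m) *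
        (qnum q (((a + d * m : ℕ) : ℝ) + x)) ^ k := by
    obtain ⟨e, rfl⟩ : ∃ e, d = e + 1 := ⟨d - 1, by omega⟩
    rw [Nat.sumByResidueClasses (qEuler_summable q x hq0 hq1 k) (e + 1), Finset.sum_range]
    rfl
  have key : ∀ a : ℕ, ∑' m : ℕ, (-q) ^ (a + d * m) *
        (qnum q (((a + d * m : ℕ) : ℝ) + x)) ^ k =
      (qnum q (d : ℝ)) ^ k * (-q) ^ a *
        ∑' m : ℕ, (-(q ^ d)) ^ m * (qnum (q ^ d) ((m : ℝ) + ((a : ℝ) + x) / d)) ^ k := by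
    intro a
    rw [← tsum_mul_left]
    refine tsum_congr fun m => ?_
    have h3 : (m : ℝ) + ((a : ℝ) + x) / d = (((a + d * m : ℕ) : ℝ) + x) / d := by
      push_cast
      field_simp
      ring
    rw [h3, ← qnum_mul_base q hq0 hq1 d hd0 (((a + d * m : ℕ) : ℝ) + x), mul_pow, pow_add,
      pow_mul, hd.neg_pow]
    ring
  unfold qEuler
  rw [hsplit, Finset.mul_sum, Finset.mul_sum, Finset.mul_sum]
  refine Finset.sum_congr rfl fun a _ => ?_
  rw [key a]
  generalize (∑' m : ℕ, (-(q ^ d)) ^ m * (qnum (q ^ d) ((m : ℝ) + ((a : ℝ) + x) / d)) ^ k) = T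
  field_simp

theorem qChanghee_distribution_relation (q x : ℝ) (hq0 : 0 < q) (hq1 : q < 1)
    (d : ℕ) (hd0 : 0 < d) (hd : Odd d) (n : ℕ) :
    qChanghee q n x = ((1 + q) / (1 + q ^ d)) *
      ∑ k ∈ Finset.range (n + 1), (qnum q (d : ℝ)) ^ k *
        (∑ a ∈ Finset.range d, (-q) ^ a * qEuler (q ^ d) k (((a : ℝ) + x) / (d : ℝ))) *
          (S1 n k : ℝ) := by
  unfold qChanghee
  rw [Finset.mul_sum]
  refine Finset.sum_congr rfl fun k _ => ?_
  rw [qEuler_distribution q x hq0 hq1 d hd0 hd k]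
  ring
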